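/- Suppose stage cost c : ℕ × ℕ → ℝ satisfies c(τ₁, τ₂) ≥ K·ρ^{max(τ₁,τ₂)} for constants K > 0 and ρ > 1. Then for the deterministic two-action chain where action 1 maps (τ₁, τ₂) ↦ (1, τ₂+1) and action 2 maps (τ₁, τ₂) ↦ (τ₁+1, 1), any policy whose trajectory visits states with max(τ₁, τ₂) unbounded has limsup average cost equal to +∞, whereas the alternating policy achieves a finite average cost; hence any average-cost-optimal policy produces a trajectory confined to a finite set of states. -/

import Mathlib

open Filter

/-- One step of the two-action chain under policy `π` (action 1 if `π s = true`). -/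
def schedStep (π : ℕ × ℕ → Bool) (s : ℕ × ℕ) : ℕ × ℕ :=
  if π s then (1, s.2 + 1) else (s.1 + 1, 1)

/-- Trajectory of the chain under policy `π` from `s₀`. -/
def schedTraj (π : ℕ × ℕ → Bool) (s₀ : ℕ × ℕ) (k : ℕ) : ℕ × ℕ :=
  (schedStep π)^[k] s₀

/-- Limsup average cost (as an extended real) of policy `π` from `s₀`. -/
noncomputable def schedAvgCost (c : ℕ × ℕ → ℝ) (π : ℕ × ℕ → Bool) (s₀ : ℕ × ℕ) : EReal :=
  limsup (fun T : ℕ => (((∑ k ∈ Finset.range T, c (schedTraj π s₀ k)) / T : ℝ) : EReal)) atTop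

/-!
If a trajectory visits infinitely many states, determinism forbids it from ever returning to a
state. It is then an injective sequence of states, so it eventually leaves each of the finitely
many states of cost at most `B`; the stage costs along it tend to infinity, and so do their
averages. A trajectory with finitely many states has bounded stage costs, hence a finite average
cost, and the alternating policy produces such a trajectory because it keeps `τ₁ + τ₂` bounded.
An optimal policy therefore cannot visit infinitely many states.
-/

theorem tendsto_average_atTop {u : ℕ → ℝ} (hu : Tendsto u atTop atTop) :
    Tendsto (fun T : ℕ => (∑ k ∈ Finset.range T, u k) / T) atTop atTop := by
  refine tendsto_atTop.2 fun B => ?_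
  -- Truncated at `B + 1`, the sequence converges, so the convergent Cesàro theorem applies.
  have truncation : Tendsto (fun k => min (u k) (B + 1)) atTop (nhds (B + 1)) :=
    tendsto_const_nhds.congr' <|
      (hu.eventually_ge_atTop (B + 1)).mono fun _ hk => (min_eq_right hk).symm
  filter_upwards [truncation.cesaro.eventually_const_le (lt_add_one B)] with T hT
  calc
    B ≤ (T : ℝ)⁻¹ * ∑ k ∈ Finset.range T, min (u k) (B + 1) := hT
    _ ≤ (T : ℝ)⁻¹ * ∑ k ∈ Finset.range T, u k := by
      gcongr
      exact min_le_left _ _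
    _ = (∑ k ∈ Finset.range T, u k) / T := inv_mul_eq_div _ _

theorem average_le_of_forall_le {u : ℕ → ℝ} {C : ℝ} (hu : ∀ k, u k ≤ C) {T : ℕ} (hT : 0 < T) :
    (∑ k ∈ Finset.range T, u k) / T ≤ C := by
  rw [div_le_iff₀' (Nat.cast_pos.2 hT)]
  simpa using Finset.sum_le_card_nsmul (Finset.range T) u C fun k _ => hu k

theorem tendsto_max_cofinite_atTop {α : Type*} [LinearOrder α] [LocallyFiniteOrderBot α] :
    Tendsto (fun s : α × α => max s.1 s.2) cofinite atTop := by
  refine tendsto_atTop.2 fun M => eventually_cofinite.2 ?_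
  refine ((Set.finite_Iio M).prod (Set.finite_Iio M)).subset fun s hs => ?_
  exact max_lt_iff.1 (not_le.1 hs)

theorem tendsto_atTop_of_geometric_le {α : Type*} {l : Filter α} {c : α → ℝ} {g : α → ℕ}
    {K ρ : ℝ} (hK : 0 < K) (hρ : 1 < ρ) (hg : Tendsto g l atTop)
    (hc : ∀ s, K * ρ ^ g s ≤ c s) : Tendsto c l atTop :=
  tendsto_atTop_mono hc <|
    ((tendsto_pow_atTop_atTop_of_one_lt hρ).comp hg).const_mul_atTop hK

theorem infinite_range_of_unbounded_comp {ι α β : Type*} [Preorder β] [Nonempty β] [NoMaxOrder β]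
    {u : ι → α} {g : α → β} (h : ∀ M, ∃ k, M ≤ g (u k)) : (Set.range u).Infinite := by
  refine Set.Infinite.of_image g (Set.infinite_of_forall_exists_gt fun M => ?_)
  obtain ⟨M', hM'⟩ := exists_gt M
  obtain ⟨k, hk⟩ := h M'
  exact ⟨g (u k), Set.mem_image_of_mem g (Set.mem_range_self k), hM'.trans_le hk⟩

section Orbit

variable {α : Type*} {f : α → α} {x : α}

theorem finite_range_iterate_of_iterate_eq {i j : ℕ} (hij : i < j) (h : f^[i] x = f^[j] x) :
    (Set.range fun k => f^[k] x).Finite := by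
  refine ((Set.finite_Iio j).image fun k => f^[k] x).subset (Set.range_subset_iff.2 fun k => ?_)
  induction k using Nat.strong_induction_on with
  | _ k ih =>
    rcases lt_or_ge k j with hkj | hjk
    · exact Set.mem_image_of_mem _ hkj
    · have shift : f^[k] x = f^[k - j + i] x := by
        rw [Function.iterate_add_apply, h, ← Function.iterate_add_apply, Nat.sub_add_cancel hjk]
      rw [shift]
      exact ih _ (by omega)

theorem injective_iterate_of_infinite_range (h : (Set.range fun k => f^[k] x).Infinite) :
    Function.Injective fun k => f^[k] x :=
  .of_lt_imp_ne fun _ _ hij heq => h (finite_range_iterate_of_iterate_eq hij heq)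

theorem finite_range_iterate_of_mapsTo {S : Set α} (hS : S.Finite) (hf : Set.MapsTo f S S)
    (hx : x ∈ S) : (Set.range fun k => f^[k] x).Finite :=
  hS.subset (Set.range_subset_iff.2 fun k => hf.iterate k hx)

end Orbit

section AverageCost

variable {c : ℕ × ℕ → ℝ} {π : ℕ × ℕ → Bool} {s₀ : ℕ × ℕ}

theorem schedAvgCost_eq_top_of_infinite_range (hc : Tendsto c cofinite atTop)
    (h : (Set.range (schedTraj π s₀)).Infinite) : schedAvgCost c π s₀ = ⊤ := by
  have no_return : Function.Injective (schedTraj π s₀) := injective_iterate_of_infinite_range h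
  have costs : Tendsto (fun k => c (schedTraj π s₀ k)) atTop atTop :=
    hc.comp (Nat.cofinite_eq_atTop ▸ no_return.tendsto_cofinite)
  exact (EReal.tendsto_coe_nhds_top_iff.2 (tendsto_average_atTop costs)).limsup_eq

theorem schedAvgCost_lt_top_of_finite_range (h : (Set.range (schedTraj π s₀)).Finite) :
    schedAvgCost c π s₀ < ⊤ := by
  obtain ⟨C, hC⟩ := (h.image c).bddAbove
  have cost_le : ∀ k, c (schedTraj π s₀ k) ≤ C := fun k =>
    hC (Set.mem_image_of_mem c (Set.mem_range_self k))
  have avgCost_le : schedAvgCost c π s₀ ≤ (C : EReal) :=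
    limsup_le_of_le (by isBoundedDefault) <| (eventually_gt_atTop 0).mono fun _ hT =>
      EReal.coe_le_coe (average_le_of_forall_le cost_le hT)
  exact avgCost_le.trans_lt (EReal.coe_lt_top C)

end AverageCost

/-- The alternating policy, encoded as a function of the current state: it resets the larger
coordinate, which once the chain is running is the one not reset by the previous action. Hence it
ends up cycling between `(1, 2)` and `(2, 1)`. -/
def alternatingPolicy (s : ℕ × ℕ) : Bool :=
  decide (s.2 ≤ s.1)

theorem schedStep_alternatingPolicy_add_le (s : ℕ × ℕ) :
    (schedStep alternatingPolicy s).1 + (schedStep alternatingPolicy s).2 ≤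
      max 3 (s.1 + s.2) := by
  simp only [schedStep, alternatingPolicy, decide_eq_true_eq]
  split_ifs <;> dsimp only <;> omega

theorem finite_range_schedTraj_alternatingPolicy (s₀ : ℕ × ℕ) :
    (Set.range (schedTraj alternatingPolicy s₀)).Finite := by
  let S : Set (ℕ × ℕ) := {s | s.1 + s.2 ≤ max 3 (s₀.1 + s₀.2)}
  have finite : S.Finite := (Set.finite_Iic (max 3 (s₀.1 + s₀.2), max 3 (s₀.1 + s₀.2))).subset
    fun s hs => ⟨(Nat.le_add_right _ _).trans hs, (Nat.le_add_left _ _).trans hs⟩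
  have invariant : Set.MapsTo (schedStep alternatingPolicy) S S := fun s hs =>
    (schedStep_alternatingPolicy_add_le s).trans (max_le (le_max_left _ _) hs)
  have start : s₀ ∈ S := le_max_right 3 (s₀.1 + s₀.2)
  exact finite_range_iterate_of_mapsTo finite invariant start

theorem optimal_policy_finite_states_general (c : ℕ × ℕ → ℝ) (hc : Tendsto c cofinite atTop) :
    (∀ (π : ℕ × ℕ → Bool) (s₀ : ℕ × ℕ),
        (∀ M : ℕ, ∃ k : ℕ, M ≤ max (schedTraj π s₀ k).1 (schedTraj π s₀ k).2) →
        schedAvgCost c π s₀ = ⊤) ∧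
    (∀ s₀ : ℕ × ℕ, schedAvgCost c alternatingPolicy s₀ < ⊤) ∧
    (∀ (π : ℕ × ℕ → Bool) (s₀ : ℕ × ℕ),
        (∀ π' : ℕ × ℕ → Bool, schedAvgCost c π s₀ ≤ schedAvgCost c π' s₀) →
        (Set.range (schedTraj π s₀)).Finite) := by
  have alternating_lt_top (s₀ : ℕ × ℕ) : schedAvgCost c alternatingPolicy s₀ < ⊤ :=
    schedAvgCost_lt_top_of_finite_range (finite_range_schedTraj_alternatingPolicy s₀)
  refine ⟨fun π s₀ unbounded => ?_, alternating_lt_top, fun π s₀ optimal => ?_⟩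
  · exact schedAvgCost_eq_top_of_infinite_range hc
      (infinite_range_of_unbounded_comp (g := fun s => max s.1 s.2) unbounded)
  · by_contra infinite
    exact ((optimal alternatingPolicy).trans_lt (alternating_lt_top s₀)).ne
      (schedAvgCost_eq_top_of_infinite_range hc infinite)

/-- If the stage cost grows geometrically in `max(τ₁,τ₂)`, then any policy visiting states
with unbounded `max(τ₁,τ₂)` has infinite limsup average cost, the alternating policy has
finite average cost, and hence an average-cost-optimal policy stays in a finite set. -/
theorem optimal_policy_finite_states (c : ℕ × ℕ → ℝ) (K ρ : ℝ) (hK : 0 < K) (hρ : 1 < ρ)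
    (hc : ∀ s : ℕ × ℕ, K * ρ ^ max s.1 s.2 ≤ c s) :
    (∀ (π : ℕ × ℕ → Bool) (s₀ : ℕ × ℕ),
        (∀ M : ℕ, ∃ k : ℕ, M ≤ max (schedTraj π s₀ k).1 (schedTraj π s₀ k).2) →
        schedAvgCost c π s₀ = ⊤) ∧
    (∀ s₀ : ℕ × ℕ, schedAvgCost c (fun s => decide (s.2 ≤ s.1)) s₀ < ⊤) ∧
    (∀ (π : ℕ × ℕ → Bool) (s₀ : ℕ × ℕ),
        (∀ π' : ℕ × ℕ → Bool, schedAvgCost c π s₀ ≤ schedAvgCost c π' s₀) →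
        (Set.range (schedTraj π s₀)).Finite) := by
  exact optimal_policy_finite_states_general c
    (tendsto_atTop_of_geometric_le hK hρ tendsto_max_cofinite_atTop hc)
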